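/- For every finite simple graph G on vertex set Fin n and every field F, the minrank of G over F is at most the clique cover number of G, i.e., minrank_F(G) ≤ χ(Gᶜ), where Gᶜ denotes the complement of G. -/

import Mathlib

/-- The chromatic number of a graph, as a natural number: the least `m` such that the graph
admits a proper coloring with `m` colors. -/
noncomputable def chromNum {W : Type*} (G : SimpleGraph W) : ℕ :=
  sInf {m | G.Colorable m}

/-- `A` represents `G` over `F` if all diagonal entries of `A` are nonzero and `A i j = 0`
for all distinct non-adjacent vertices `i`, `j`. The minrank of `G` over `F` is the minimum
rank of a matrix representing `G` over `F`. -/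
noncomputable def minrank (F : Type*) [Field F] {V : Type*} [Fintype V] [DecidableEq V]
    (G : SimpleGraph V) : ℕ :=
  sInf {r | ∃ A : Matrix V V F, (∀ i, A i i ≠ 0) ∧
    (∀ i j, i ≠ j → ¬ G.Adj i j → A i j = 0) ∧ A.rank = r}

/-!
A proper coloring of `Gᶜ` partitions the vertices of `G` into cliques. The matrix with entry `1` at
`(i, j)` when `i` and `j` have the same color, and `0` otherwise, represents `G`. It arises from the
identity matrix indexed by the colors by repeating rows and columns, so its rank is at most the
number of colors.
-/

section Represents

variable {V R : Type*}

/-- `Represents G A` says that the matrix `A` represents the graph `G`: this is the condition on the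
matrices over which `minrank` minimizes the rank, with entries allowed in any type with a zero. -/
structure Represents [Zero R] (G : SimpleGraph V) (A : Matrix V V R) : Prop where
  diag_ne_zero : ∀ i, A i i ≠ 0
  eq_zero_of_not_adj : ∀ i j, i ≠ j → ¬ G.Adj i j → A i j = 0

theorem represents_one_submatrix_of_coloring_compl {α : Type*} [DecidableEq α] [Zero R] [One R]
    [NeZero (1 : R)] {G : SimpleGraph V} (c : Gᶜ.Coloring α) :
    Represents G ((1 : Matrix α α R).submatrix c c) where
  diag_ne_zero i := by
    rw [Matrix.submatrix_apply, Matrix.one_apply_eq]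
    exact one_ne_zero
  eq_zero_of_not_adj i j hij hadj :=
    Matrix.one_apply_ne (c.valid ((G.compl_adj i j).2 ⟨hij, hadj⟩))

end Represents

section Minrank

variable {V F : Type*} [Fintype V] [DecidableEq V] [Field F] {G : SimpleGraph V}

theorem minrank_le_rank {A : Matrix V V F} (hA : Represents G A) : minrank F G ≤ A.rank :=
  Nat.sInf_le ⟨A, hA.diag_ne_zero, hA.eq_zero_of_not_adj, rfl⟩

theorem minrank_le_card_of_coloring_compl {α : Type*} [Fintype α] (c : Gᶜ.Coloring α) :
    minrank F G ≤ Fintype.card α := by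
  classical
  calc
    minrank F G ≤ ((1 : Matrix α α F).submatrix c c).rank :=
      minrank_le_rank (represents_one_submatrix_of_coloring_compl c)
    _ ≤ (1 : Matrix α α F).rank := Matrix.rank_submatrix_le _ c c
    _ = Fintype.card α := Matrix.rank_one

end Minrank

theorem colorable_chromNum {V : Type*} {G : SimpleGraph V} {m : ℕ} (hG : G.Colorable m) :
    G.Colorable (chromNum G) :=
  Nat.sInf_mem (s := {k | G.Colorable k}) ⟨m, hG⟩

theorem minrank_le_cliqueCover_general {V : Type*} [Fintype V] [DecidableEq V] (F : Type*) [Field F]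
    (G : SimpleGraph V) : minrank F G ≤ chromNum Gᶜ := by
  obtain ⟨c⟩ := colorable_chromNum Gᶜ.colorable_of_fintype
  simpa only [Fintype.card_fin] using minrank_le_card_of_coloring_compl (F := F) c

/-- The minrank of `G` over a field `F` is at most the clique cover number of `G`
(the chromatic number of the complement of `G`). -/
theorem minrank_le_cliqueCover (n : ℕ) (F : Type*) [Field F] (G : SimpleGraph (Fin n)) :
    minrank F G ≤ chromNum Gᶜ :=
  minrank_le_cliqueCover_general F G
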